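/- arXiv:1311.0137 — 2 statements merged into one kernel-verified Lean document; each statement's English description precedes it below -/
import Mathlib

section
/- Every graph is a topological minor of some 1-nearly planar graph. -/
/-!
Definitions for wall-by-wall distance, λ-flat graphs and ξ-nearly planar graphs,
following Grigoriev, Koutsonas and Thilikos, "Nearly Planar Graphs and λ-flat Graphs".

A plane graph is modelled combinatorially as a simple graph equipped with a rotation
system (a cyclic order of the edges incident to each vertex) that is planar, i.e.
satisfies Euler's formula (with faces counted as orbits of the face-tracing successor
on darts, corrected for isolated vertices and the number of connected components).

A graph embedding in the sphere (where edges may cross, but only at points that are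
not vertices) is modelled topologically by a `Drawing`: an injective placement of the
vertices on the unit sphere of `ℝ³` together with, for each edge, a simple arc joining
the images of its endpoints whose interior avoids all vertices.
-/

namespace WBW

/-- The set of edges of `G` incident to the vertex `v`. -/
def incidentSet {V : Type*} (G : SimpleGraph V) (v : V) : Set (Sym2 V) :=
  {e | e ∈ G.edgeSet ∧ v ∈ e}

/-- A simple graph together with a rotation system: for every vertex `v`, a
permutation of `Sym2 V` which fixes every non-incident edge and is a single cycle on
the set of edges incident to `v` (the cyclic order `σ_v` of the drawing). -/
structure RotationSystem (V : Type*) where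
  G : SimpleGraph V
  rot : V → Equiv.Perm (Sym2 V)
  rot_cycleOn : ∀ v, (rot v).IsCycleOn (incidentSet G v)
  rot_fixed : ∀ v, ∀ e ∉ incidentSet G v, rot v e = e

variable {V : Type*}

/-- The face-tracing successor on darts: the dart `(u,v)` is followed by the dart
leaving `v` along the edge succeeding `s(u,v)` in the cyclic order around `v`. -/
noncomputable def RotationSystem.faceNext (R : RotationSystem V) (d : R.G.Dart) :
    R.G.Dart :=
  have hmem : d.edge ∈ incidentSet R.G d.toProd.2 :=
    ⟨d.edge_mem, by rcases d with ⟨⟨a, b⟩, h⟩; simp [SimpleGraph.Dart.edge]⟩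
  have hmem' : R.rot d.toProd.2 d.edge ∈ incidentSet R.G d.toProd.2 :=
    (R.rot_cycleOn d.toProd.2).1.mapsTo hmem
  ⟨(d.toProd.2, Sym2.Mem.other hmem'.2), by
    have h := Sym2.other_spec hmem'.2
    have h2 : R.rot d.toProd.2 d.edge ∈ R.G.edgeSet := hmem'.1
    rw [← h] at h2
    exact h2⟩

/-- The number of faces of a rotation system: the number of orbits of the
face-tracing successor on darts. -/
noncomputable def RotationSystem.numFaces (R : RotationSystem V) : ℕ :=
  Nat.card (Quot (fun a b : R.G.Dart => R.faceNext a = b))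

/-- A rotation system is plane (it is an embedding of the graph in the sphere without
crossings) iff it satisfies Euler's formula, componentwise; isolated vertices are
accounted for separately, since they carry no dart. -/
def RotationSystem.IsPlane (R : RotationSystem V) : Prop :=
  Nat.card V + R.numFaces + Nat.card {v : V | ∀ w, ¬ R.G.Adj v w} =
    Nat.card R.G.edgeSet + 2 * Nat.card R.G.ConnectedComponent

/-- Two edges are attached if they share a vertex `v` and appear consecutively in the
cyclic order `σ_v` or its inverse. -/
def Attached (R : RotationSystem V) (e e' : Sym2 V) : Prop :=
  ∃ v : V, e ∈ incidentSet R.G v ∧ e' ∈ incidentSet R.G v ∧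
    (R.rot v e = e' ∨ R.rot v e' = e)

/-- A wall-by-wall walk: a nonempty sequence of distinct edges of `R.G` in which
every two consecutive edges are attached. -/
def IsWbwWalk (R : RotationSystem V) (L : List (Sym2 V)) : Prop :=
  L ≠ [] ∧ L.Nodup ∧ (∀ e ∈ L, e ∈ R.G.edgeSet) ∧ L.Chain' (Attached R)

/-- An `(x,y)`-wall-by-wall walk: a wall-by-wall walk whose first edge is incident to
`x` and whose last edge is incident to `y`. -/
def IsWbwWalkFromTo (R : RotationSystem V) (x y : V) (L : List (Sym2 V)) : Prop :=
  IsWbwWalk R L ∧ (∃ e, L.head? = some e ∧ x ∈ e) ∧ (∃ e, L.getLast? = some e ∧ y ∈ e)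

/-- The wall-by-wall distance between `x` and `y`: the least number of edges of an
`(x,y)`-wall-by-wall walk (`⊤` if there is no such walk). -/
noncomputable def wbwDist (R : RotationSystem V) (x y : V) : ℕ∞ :=
  sInf {n : ℕ∞ | ∃ L, IsWbwWalkFromTo R x y L ∧ (L.length : ℕ∞) = n}

/-- The `λ`-power of a plane graph: keep all edges and make adjacent all pairs of
vertices at wall-by-wall distance at most `λ`. -/
def RotationSystem.power (R : RotationSystem V) (l : ℕ) : SimpleGraph V :=
  R.G ⊔ SimpleGraph.fromRel (fun x y => wbwDist R x y ≤ (l : ℕ∞))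

/-- `H` is a subgraph of `G` via the injection `τ`. -/
def SubgraphVia {U V : Type*} (H : SimpleGraph U) (G : SimpleGraph V) (τ : U → V) :
    Prop :=
  Function.Injective τ ∧ ∀ x y, H.Adj x y → G.Adj (τ x) (τ y)

/-- A graph is `λ`-flat if it is a subgraph of the `λ`-power of some plane graph. -/
def IsFlat (l : ℕ) {V : Type*} (G : SimpleGraph V) : Prop :=
  ∃ (W : Type) (_ : Finite W) (R : RotationSystem W) (τ : V → W),
    R.IsPlane ∧ SubgraphVia G (R.power l) τ

/-- The unit sphere in `ℝ³`. -/
def unitSphere : Set (EuclideanSpace ℝ (Fin 3)) := Metric.sphere 0 1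

/-- A drawing (embedding) of a graph in the sphere: vertices are placed injectively,
every edge is drawn as a simple arc joining the images of its two endpoints, and the
interior of every arc avoids all vertex images (so edges may meet, away from their
endpoints, only at points that are not vertices). -/
structure Drawing {V : Type*} (G : SimpleGraph V) where
  vmap : V → unitSphere
  vmap_inj : Function.Injective vmap
  arc : Sym2 V → C(Set.Icc (0 : ℝ) 1, unitSphere)
  arc_inj : ∀ e ∈ G.edgeSet, Function.Injective (arc e)
  arc_ends : ∀ e ∈ G.edgeSet,
    Sym2.map vmap e =
      s(arc e ⟨0, Set.mem_Icc.mpr (by norm_num)⟩, arc e ⟨1, Set.mem_Icc.mpr (by norm_num)⟩)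
  interior_avoids : ∀ e ∈ G.edgeSet, ∀ t : Set.Icc (0 : ℝ) 1,
    (t : ℝ) ≠ 0 → (t : ℝ) ≠ 1 → arc e t ∉ Set.range vmap

/-- The crossings of the edge `e` in a drawing: pairs consisting of another edge `e'`
and a point, not a vertex, lying on the arcs of both `e` and `e'`. -/
def crossingSet {V : Type*} {G : SimpleGraph V} (D : Drawing G) (e : Sym2 V) :
    Set (Sym2 V × unitSphere) :=
  {q | q.1 ∈ G.edgeSet ∧ q.1 ≠ e ∧ q.2 ∈ Set.range (D.arc e) ∧
    q.2 ∈ Set.range (D.arc q.1) ∧ q.2 ∉ Set.range D.vmap}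

/-- A graph is `ξ`-nearly planar if it has a drawing in the sphere in which every
edge is crossed at most `ξ` times. -/
def IsNearlyPlanar (x : ℕ) {V : Type*} (G : SimpleGraph V) : Prop :=
  ∃ D : Drawing G, ∀ e ∈ G.edgeSet,
    (crossingSet D e).Finite ∧ (crossingSet D e).ncard ≤ x

/-- `λ(G)`: the least `λ` for which `G` is `λ`-flat. -/
noncomputable def flatNum {V : Type*} (G : SimpleGraph V) : ℕ :=
  sInf {l | IsFlat l G}

/-- `ξ(G)`: the least `ξ` for which `G` is `ξ`-nearly planar. -/
noncomputable def nearNum {V : Type*} (G : SimpleGraph V) : ℕ :=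
  sInf {x | IsNearlyPlanar x G}

/-- A graph is 3-connected if it has more than 3 vertices and removing any at most 2
vertices leaves it connected. -/
def ThreeConnected {V : Type*} (G : SimpleGraph V) : Prop :=
  3 < Nat.card V ∧ ∀ s : Set V, s.ncard ≤ 2 → (G.induce sᶜ).Connected

/-- A plane graph is triangulated if every face is bounded by a triangle, i.e. every
orbit of the face-tracing successor has length exactly 3. -/
def RotationSystem.Triangulated (R : RotationSystem V) : Prop :=
  ∀ d : R.G.Dart, R.faceNext (R.faceNext (R.faceNext d)) = d ∧ R.faceNext d ≠ d

/-- `H` is a topological minor of `G`: some subdivision of `H` is a subgraph of `G`,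
equivalently the branch vertices embed injectively into `G` and the edges of `H` are
realized by internally disjoint paths of `G` avoiding the branch vertices. -/
def IsTopMinor {U V : Type*} (H : SimpleGraph U) (G : SimpleGraph V) : Prop :=
  ∃ τ : U → V, Function.Injective τ ∧
    ∃ P : ∀ ⦃x y : U⦄, H.Adj x y → G.Walk (τ x) (τ y),
      (∀ ⦃x y : U⦄ (h : H.Adj x y), (P h).IsPath) ∧
      (∀ ⦃x y : U⦄ (h : H.Adj x y), ∀ v ∈ (P h).support,
        v ∈ Set.range τ → v = τ x ∨ v = τ y) ∧
      (∀ ⦃x y x' y' : U⦄ (h : H.Adj x y) (h' : H.Adj x' y'), s(x, y) ≠ s(x', y') →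
        ∀ v, v ∈ (P h).support → v ∈ (P h').support → v ∈ Set.range τ)

/-- `H` is a contraction of `G`: `H` is obtained from `G` by contracting edges,
equivalently there is a surjection `V(G) → V(H)` with connected fibres such that the
edges of `H` are exactly the pairs of distinct fibres joined by an edge of `G`. -/
def IsContractionOf {U V : Type*} (H : SimpleGraph U) (G : SimpleGraph V) : Prop :=
  ∃ f : V → U, Function.Surjective f ∧
    (∀ u : U, (G.induce (f ⁻¹' {u})).Connected) ∧
    (∀ a b : U, H.Adj a b ↔ a ≠ b ∧ ∃ x y, G.Adj x y ∧ f x = a ∧ f y = b)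

/-- The medial graph of a plane graph `G`: its vertices are the edges of `G`, two of
them being adjacent iff they are attached (this is the dual of the radial graph). -/
def medial (R : RotationSystem V) : SimpleGraph {e : Sym2 V // e ∈ R.G.edgeSet} :=
  SimpleGraph.fromRel (fun e f => Attached R e.1 f.1)

/-- The `(n × n)`-grid graph. -/
def gridGraph (n : ℕ) : SimpleGraph (Fin n × Fin n) :=
  SimpleGraph.fromRel (fun a b =>
    (a.1 = b.1 ∧ (a.2 : ℕ) + 1 = (b.2 : ℕ)) ∨ (a.2 = b.2 ∧ (a.1 : ℕ) + 1 = (b.1 : ℕ)))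

/-- The faces of a rotation system: orbits of the face-tracing successor on darts. -/
def RotationSystem.Face (R : RotationSystem V) : Type _ :=
  Quot (fun a b : R.G.Dart => R.faceNext a = b)

/-- The edge `e` lies on the boundary of the face `F`. -/
def EdgeOnFace (R : RotationSystem V) (e : Sym2 V) (F : R.Face) : Prop :=
  ∃ d : R.G.Dart, Quot.mk _ d = F ∧ d.edge = e

/-- A wall-by-wall walk passes through the face `F` if two consecutive edges of the
walk both lie on the boundary of `F`. -/
def WalkThroughFace (R : RotationSystem V) (L : List (Sym2 V)) (F : R.Face) : Prop :=
  ∃ (l₁ : List (Sym2 V)) (e₁ e₂ : Sym2 V) (l₂ : List (Sym2 V)),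
    L = l₁ ++ e₁ :: e₂ :: l₂ ∧ EdgeOnFace R e₁ F ∧ EdgeOnFace R e₂ F

end WBW

/-!
By monotonicity it suffices to treat the complete graph on `n` vertices. Let the diagonals of the
square lattice run through all cells: two of them meet, away from the lattice points, only as the
two diagonals of a common cell, so every edge is crossed at most once, and the horizontal edges are
not crossed at all. Below the lattice, the branch vertex `i` is joined by a fan to a block of
`2 * n` lattice points on the bottom row, its ports. From an even port we follow the diagonal going
up to the right, from an odd port the one going up to the left; parallel rays are disjoint, and
rays in different directions pass through lattice points of different parity, so no two rays share
a vertex. If `i < j`, the edge `ij` is routed along the ray from an even port of `i` to the right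
and the ray from an odd port of `j` to the left, until they reach horizontally adjacent lattice
points.
-/

namespace WBW

variable {U V W : Type*}

/-! ### Straight-line drawings -/

/-- An embedding of the plane in the sphere, namely the inverse of a stereographic projection. It
transports drawings in the plane to drawings in the sphere. -/
noncomputable def planeToSphere : C(ℝ × ℝ, unitSphere) :=
  haveI : Fact (Module.finrank ℝ (EuclideanSpace ℝ (Fin 3)) = 2 + 1) := ⟨by simp⟩
  let pole : Metric.sphere (0 : EuclideanSpace ℝ (Fin 3)) 1 := ⟨EuclideanSpace.single 0 1, by simp⟩
  let plane : (ℝ × ℝ) ≃L[ℝ] EuclideanSpace ℝ (Fin 2) := .ofFinrankEq (by simp)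
  { toFun := fun z => (stereographic' 2 pole).symm (plane z)
    continuous_toFun :=
      (continuousOn_univ.1 (stereographic'_target (n := 2) pole ▸
        (stereographic' 2 pole).continuousOn_symm)).comp plane.continuous }

lemma planeToSphere_injective : Function.Injective planeToSphere := by
  have : Fact (Module.finrank ℝ (EuclideanSpace ℝ (Fin 3)) = 2 + 1) := ⟨by simp⟩
  intro z w h
  exact ContinuousLinearEquiv.injective _
    ((stereographic' 2 _).symm.injOn (by simp) (by simp) h)

/-- The relative interior of the straight segment representing the edge `e` when each vertex `v`
is placed at the point `pos v` of the plane. -/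
def edgeSegment (pos : V → ℝ × ℝ) (e : Sym2 V) : Set (ℝ × ℝ) :=
  e.lift ⟨fun u v => openSegment ℝ (pos u) (pos v), fun _ _ => openSegment_symm _ _ _⟩

lemma edgeSegment_mk (pos : V → ℝ × ℝ) (u v : V) :
    edgeSegment pos s(u, v) = openSegment ℝ (pos u) (pos v) := rfl

lemma edgeSegment_map (pos : V → ℝ × ℝ) (f : U → V) (e : Sym2 U) :
    edgeSegment pos (e.map f) = edgeSegment (pos ∘ f) e := by
  induction e with
  | _ u v => rfl

lemma mk_out (e : Sym2 V) : s(e.out.1, e.out.2) = e := Quot.out_eq e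

/-- The straight arc on the sphere that represents the edge `e`, oriented by the choice of
endpoints made by `Quot.out`. -/
noncomputable def straightArc (pos : V → ℝ × ℝ) (e : Sym2 V) :
    C(Set.Icc (0 : ℝ) 1, unitSphere) :=
  planeToSphere.comp
    ⟨fun t => AffineMap.lineMap (pos e.out.1) (pos e.out.2) (t : ℝ),
      AffineMap.lineMap_continuous.comp continuous_subtype_val⟩

lemma straightArc_apply (pos : V → ℝ × ℝ) (e : Sym2 V) (t : Set.Icc (0 : ℝ) 1) :
    straightArc pos e t =
      planeToSphere (AffineMap.lineMap (pos e.out.1) (pos e.out.2) (t : ℝ)) := rfl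

lemma lineMap_mem_edgeSegment (pos : V → ℝ × ℝ) (e : Sym2 V) {t : Set.Icc (0 : ℝ) 1}
    (h0 : (t : ℝ) ≠ 0) (h1 : (t : ℝ) ≠ 1) :
    AffineMap.lineMap (pos e.out.1) (pos e.out.2) (t : ℝ) ∈ edgeSegment pos e := by
  have hseg : edgeSegment pos e = openSegment ℝ (pos e.out.1) (pos e.out.2) := by
    rw [← edgeSegment_mk, mk_out]
  rw [hseg, openSegment_eq_image_lineMap]
  exact ⟨t, ⟨t.2.1.lt_of_ne' h0, t.2.2.lt_of_ne h1⟩, rfl⟩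

/-- The drawing of `G` in the sphere whose edges are straight segments of the plane. -/
noncomputable def straightDrawing (G : SimpleGraph V) (pos : V → ℝ × ℝ)
    (hpos : Function.Injective pos)
    (havoid : ∀ e ∈ G.edgeSet, ∀ v, pos v ∉ edgeSegment pos e) : Drawing G where
  vmap v := planeToSphere (pos v)
  vmap_inj := planeToSphere_injective.comp hpos
  arc := straightArc pos
  arc_inj e he s t hst := by
    have hne : pos e.out.1 ≠ pos e.out.2 := by
      rw [← mk_out e] at he
      exact hpos.ne (G.ne_of_adj he)
    exact Subtype.ext (AffineMap.lineMap_injective ℝ hne (planeToSphere_injective hst))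
  arc_ends e _ := by
    conv_lhs => rw [← mk_out e]
    simp [straightArc_apply]
  interior_avoids e he t h0 h1 := by
    rintro ⟨v, hv⟩
    refine havoid e he v ?_
    rw [planeToSphere_injective hv]
    exact lineMap_mem_edgeSegment pos e h0 h1

/-- The crossings of the edge `e` when all edges of `G` are drawn as straight segments of the plane:
the planar counterpart of `crossingSet`. -/
def segmentCrossings (G : SimpleGraph V) (pos : V → ℝ × ℝ) (e : Sym2 V) :
    Set (Sym2 V × (ℝ × ℝ)) :=
  {q | q.1 ∈ G.edgeSet ∧ q.1 ≠ e ∧ q.2 ∈ edgeSegment pos e ∧ q.2 ∈ edgeSegment pos q.1}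

section StraightDrawing

variable {G : SimpleGraph V} {pos : V → ℝ × ℝ} (hpos : Function.Injective pos)
  (havoid : ∀ e ∈ G.edgeSet, ∀ v, pos v ∉ edgeSegment pos e)

lemma exists_mem_edgeSegment_of_mem_range_arc {e : Sym2 V} {p : unitSphere}
    (hp : p ∈ Set.range ((straightDrawing G pos hpos havoid).arc e))
    (hv : p ∉ Set.range (straightDrawing G pos hpos havoid).vmap) :
    ∃ z ∈ edgeSegment pos e, planeToSphere z = p := by
  obtain ⟨⟨t, ht⟩, rfl⟩ := hp
  refine ⟨_, lineMap_mem_edgeSegment pos e (t := ⟨t, ht⟩) ?_ ?_, rfl⟩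
  · rintro rfl
    exact hv ⟨e.out.1, by simp [straightDrawing, straightArc_apply]⟩
  · rintro rfl
    exact hv ⟨e.out.2, by simp [straightDrawing, straightArc_apply]⟩

lemma crossingSet_straightDrawing_subset (e : Sym2 V) :
    crossingSet (straightDrawing G pos hpos havoid) e ⊆
      Prod.map id planeToSphere '' segmentCrossings G pos e := by
  rintro ⟨f, p⟩ ⟨hf, hfe, hpe, hpf, hv⟩
  obtain ⟨z, hze, rfl⟩ := exists_mem_edgeSegment_of_mem_range_arc hpos havoid hpe hv
  obtain ⟨w, hwf, hw⟩ := exists_mem_edgeSegment_of_mem_range_arc hpos havoid hpf hv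
  obtain rfl := planeToSphere_injective hw
  exact ⟨(f, w), ⟨hf, hfe, hze, hwf⟩, rfl⟩

include hpos havoid in
theorem isNearlyPlanar_of_encard_segmentCrossings_le {k : ℕ}
    (hcross : ∀ e ∈ G.edgeSet, (segmentCrossings G pos e).encard ≤ k) : IsNearlyPlanar k G :=
  ⟨straightDrawing G pos hpos havoid, fun e he => Set.encard_le_coe_iff_finite_ncard_le.1 <|
    (Set.encard_mono (crossingSet_straightDrawing_subset hpos havoid e)).trans <|
      (Set.encard_image_le _ _).trans (hcross e he)⟩

end StraightDrawing

/-! ### The fan grid -/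

/-- The branch vertex of the `i`-th fan of `fanGrid N`, below the left end of its block of ports. -/
def apex (N i : ℤ) : ℤ × ℤ := (N * i, -1)

/-- The edges of `fanGrid N`, oriented upwards or to the right. Each apex sees a block of `N`
consecutive lattice points on the row at height `0`. -/
inductive FanGridStep (N : ℤ) : ℤ × ℤ → ℤ × ℤ → Prop
  | fan (i x : ℤ) (hx : x ∈ Set.Ico (N * i) (N * i + N)) : FanGridStep N (apex N i) (x, 0)
  | up (x y : ℤ) (hy : 0 ≤ y) : FanGridStep N (x, y) (x + 1, y + 1)
  | down (x y : ℤ) (hy : 0 ≤ y) : FanGridStep N (x + 1, y) (x, y + 1)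
  | across (x y : ℤ) (hy : 0 ≤ y) : FanGridStep N (x, y) (x + 1, y)

/-- The horizontal edges and all diagonals of the square lattice in the upper half plane, together
with fans of width `N` below it. The vertices are the lattice points of the plane, so that their
positions in the drawing need not be chosen. -/
def fanGrid (N : ℤ) : SimpleGraph (ℤ × ℤ) := SimpleGraph.fromRel (FanGridStep N)

/-- A lattice point, as a point of the real plane. -/
def latticePoint (a : ℤ × ℤ) : ℝ × ℝ := (a.1, a.2)

lemma latticePoint_injective : Function.Injective latticePoint := by
  intro a b h
  simpa [latticePoint, Prod.ext_iff] using h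

lemma exists_of_mem_openSegment_latticePoint {a b : ℤ × ℤ} {z : ℝ × ℝ}
    (hz : z ∈ openSegment ℝ (latticePoint a) (latticePoint b)) :
    ∃ t ∈ Set.Ioo (0 : ℝ) 1, z = (a.1 + t * (b.1 - a.1), a.2 + t * (b.2 - a.2)) := by
  rw [openSegment_eq_image_lineMap] at hz
  obtain ⟨t, ht, rfl⟩ := hz
  refine ⟨t, ht, ?_⟩
  ext <;> simp only [latticePoint, AffineMap.lineMap_apply, vsub_eq_sub, Prod.mk_sub_mk,
    Prod.smul_mk, smul_eq_mul, vadd_eq_add, Prod.mk_add_mk] <;> ring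

lemma eq_and_eq_of_intCast_add_eq {m n : ℤ} {s t : ℝ} (hs : s ∈ Set.Ico (0 : ℝ) 1)
    (ht : t ∈ Set.Ico (0 : ℝ) 1) (h : m + s = n + t) : m = n ∧ s = t := by
  have hm : ⌊(m : ℝ) + s⌋ = m := by
    rw [Int.floor_intCast_add, Int.floor_eq_zero_iff.2 hs, add_zero]
  have hn : ⌊(n : ℝ) + t⌋ = n := by
    rw [Int.floor_intCast_add, Int.floor_eq_zero_iff.2 ht, add_zero]
  obtain rfl : m = n := by rw [← hm, h, hn]
  exact ⟨rfl, add_left_cancel h⟩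

section FanGrid

variable {N : ℤ} {a b c d : ℤ × ℤ} {z : ℝ × ℝ}

lemma FanGridStep.ne (h : FanGridStep N a b) : a ≠ b := by
  cases h <;> simp [apex]

lemma FanGridStep.adj (h : FanGridStep N a b) : (fanGrid N).Adj a b := ⟨h.ne, .inl h⟩

lemma exists_fanGridStep_of_mem_edgeSet {e : Sym2 (ℤ × ℤ)} (he : e ∈ (fanGrid N).edgeSet) :
    ∃ a b, FanGridStep N a b ∧ e = s(a, b) := by
  induction e with
  | _ a b =>
    obtain ⟨-, h | h⟩ := he
    · exact ⟨a, b, h, rfl⟩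
    · exact ⟨b, a, h, Sym2.eq_swap⟩

lemma FanGridStep.rises_or_across (h : FanGridStep N a b) :
    b.2 = a.2 + 1 ∨ b = (a.1 + 1, a.2) := by
  cases h <;> simp_all [apex]

lemma exists_of_mem_openSegment_of_rises (hab : b.2 = a.2 + 1)
    (hz : z ∈ openSegment ℝ (latticePoint a) (latticePoint b)) :
    ∃ t ∈ Set.Ioo (0 : ℝ) 1, z = (a.1 + t * (b.1 - a.1), a.2 + t) := by
  obtain ⟨t, ht, rfl⟩ := exists_of_mem_openSegment_latticePoint hz
  exact ⟨t, ht, by simp [hab]⟩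

lemma exists_of_mem_openSegment_across
    (hz : z ∈ openSegment ℝ (latticePoint a) (latticePoint (a.1 + 1, a.2))) :
    ∃ t ∈ Set.Ioo (0 : ℝ) 1, z = (a.1 + t, (a.2 : ℝ)) := by
  obtain ⟨t, ht, rfl⟩ := exists_of_mem_openSegment_latticePoint hz
  exact ⟨t, ht, by simp⟩

lemma FanGridStep.latticePoint_notMem_openSegment (h : FanGridStep N a b) (w : ℤ × ℤ) :
    latticePoint w ∉ openSegment ℝ (latticePoint a) (latticePoint b) := by
  intro hw
  rcases h.rises_or_across with hab | rfl
  · obtain ⟨t, ht, hwt⟩ := exists_of_mem_openSegment_of_rises hab hw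
    have hy : (w.2 : ℝ) + 0 = a.2 + t := by simpa [latticePoint] using congrArg Prod.snd hwt
    exact ht.1.ne (eq_and_eq_of_intCast_add_eq (by simp) ⟨ht.1.le, ht.2⟩ hy).2
  · obtain ⟨t, ht, hwt⟩ := exists_of_mem_openSegment_across hw
    have hx : (w.1 : ℝ) + 0 = a.1 + t := by simpa [latticePoint] using congrArg Prod.fst hwt
    exact ht.1.ne (eq_and_eq_of_intCast_add_eq (by simp) ⟨ht.1.le, ht.2⟩ hx).2

lemma disjoint_openSegment_across_rises (hcd : d.2 = c.2 + 1) :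
    Disjoint (openSegment ℝ (latticePoint a) (latticePoint (a.1 + 1, a.2)))
      (openSegment ℝ (latticePoint c) (latticePoint d)) := by
  refine Set.disjoint_left.2 fun z hz hz' => ?_
  obtain ⟨s, -, rfl⟩ := exists_of_mem_openSegment_across hz
  obtain ⟨t, ht, hst⟩ := exists_of_mem_openSegment_of_rises hcd hz'
  have hy : (a.2 : ℝ) + 0 = c.2 + t := by simpa using congrArg Prod.snd hst
  exact ht.1.ne (eq_and_eq_of_intCast_add_eq (by simp) ⟨ht.1.le, ht.2⟩ hy).2

lemma eq_of_mem_openSegment_across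
    (hz : z ∈ openSegment ℝ (latticePoint a) (latticePoint (a.1 + 1, a.2)))
    (hz' : z ∈ openSegment ℝ (latticePoint c) (latticePoint (c.1 + 1, c.2))) : a = c := by
  obtain ⟨s, hs, rfl⟩ := exists_of_mem_openSegment_across hz
  obtain ⟨t, ht, hst⟩ := exists_of_mem_openSegment_across hz'
  obtain ⟨hx, hy⟩ := Prod.ext_iff.1 hst
  exact Prod.ext (eq_and_eq_of_intCast_add_eq ⟨hs.1.le, hs.2⟩ ⟨ht.1.le, ht.2⟩ hx).1
    (by simpa using hy)

lemma exists_of_mem_openSegment_of_rises_of_rises (hab : b.2 = a.2 + 1) (hcd : d.2 = c.2 + 1)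
    (hz : z ∈ openSegment ℝ (latticePoint a) (latticePoint b))
    (hz' : z ∈ openSegment ℝ (latticePoint c) (latticePoint d)) :
    a.2 = c.2 ∧ ∃ t ∈ Set.Ioo (0 : ℝ) 1, z = (a.1 + t * (b.1 - a.1), a.2 + t) ∧
      (a.1 : ℝ) + t * (b.1 - a.1) = c.1 + t * (d.1 - c.1) := by
  obtain ⟨s, hs, rfl⟩ := exists_of_mem_openSegment_of_rises hab hz
  obtain ⟨t, ht, hst⟩ := exists_of_mem_openSegment_of_rises hcd hz'
  obtain ⟨hx, hy⟩ := Prod.ext_iff.1 hst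
  obtain ⟨hac, rfl⟩ := eq_and_eq_of_intCast_add_eq ⟨hs.1.le, hs.2⟩ ⟨ht.1.le, ht.2⟩ hy
  exact ⟨hac, s, hs, rfl, hx⟩

lemma fan_index_le {i j x y : ℤ} {t : ℝ} (ht : t ∈ Set.Ioo (0 : ℝ) 1)
    (hx : x ∈ Set.Ico (N * i) (N * i + N)) (hy : y ∈ Set.Ico (N * j) (N * j + N))
    (h : ((N * i : ℤ) : ℝ) + t * (x - (N * i : ℤ)) = (N * j : ℤ) + t * (y - (N * j : ℤ))) :
    i ≤ j := by
  by_contra! hji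
  have hN : 0 < N := by linarith [hx.1, hx.2]
  have hyi : y < N * i := by nlinarith [hy.2]
  have hyi' : (y : ℝ) < (N * i : ℤ) := by exact_mod_cast hyi
  have hxi : ((N * i : ℤ) : ℝ) ≤ x := by exact_mod_cast hx.1
  have hyj : ((N * j : ℤ) : ℝ) ≤ y := by exact_mod_cast hy.1
  nlinarith [ht.1, ht.2, mul_nonneg ht.1.le (sub_nonneg.2 hxi),
    mul_nonneg (sub_nonneg.2 ht.2.le) (sub_nonneg.2 hyj)]

lemma fan_inj {i j x y : ℤ} {t : ℝ} (ht : t ∈ Set.Ioo (0 : ℝ) 1)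
    (hx : x ∈ Set.Ico (N * i) (N * i + N)) (hy : y ∈ Set.Ico (N * j) (N * j + N))
    (h : ((N * i : ℤ) : ℝ) + t * (x - (N * i : ℤ)) = (N * j : ℤ) + t * (y - (N * j : ℤ))) :
    i = j ∧ x = y := by
  obtain rfl := (fan_index_le ht hx hy h).antisymm (fan_index_le ht hy hx h.symm)
  have hxy : (x : ℝ) = y := sub_left_injective (mul_left_cancel₀ ht.1.ne' (add_left_cancel h))
  exact ⟨rfl, by exact_mod_cast hxy⟩

lemma antidiagonal_cross {x y : ℤ} {t : ℝ} (ht : t ∈ Set.Ioo (0 : ℝ) 1)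
    (h : (x : ℝ) + t = y + 1 - t) : x = y ∧ t = 1 / 2 := by
  obtain ⟨hxy, hhalf⟩ := eq_and_eq_of_intCast_add_eq ⟨ht.1.le, ht.2⟩
    ⟨by linarith [ht.2], by linarith [ht.1]⟩
    (h.trans (add_sub_assoc _ _ _))
  exact ⟨hxy, by linarith⟩

lemma FanGridStep.eq_or_diagonals_of_rises (hab : FanGridStep N a b) (hcd : FanGridStep N c d)
    (hab' : b.2 = a.2 + 1) (hcd' : d.2 = c.2 + 1)
    (hz : z ∈ openSegment ℝ (latticePoint a) (latticePoint b))
    (hz' : z ∈ openSegment ℝ (latticePoint c) (latticePoint d)) :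
    (c = a ∧ d = b) ∨ (c = (b.1, a.2) ∧ d = (a.1, b.2) ∧
      z = midpoint ℝ (latticePoint a) (latticePoint b)) := by
  obtain ⟨hrow, t, ht, rfl, hx⟩ := exists_of_mem_openSegment_of_rises_of_rises hab' hcd' hz hz'
  suffices (c = a ∧ d = b) ∨ (c = (b.1, a.2) ∧ d = (a.1, b.2) ∧ t = 1 / 2) by
    refine this.imp_right fun ⟨hc, hd, ht⟩ => ⟨hc, hd, ?_⟩
    ext <;> simp only [ht, hab', latticePoint, midpoint_eq_smul_add, invOf_eq_inv, one_div,
      Int.cast_add, Int.cast_one, Prod.mk_add_mk, Prod.smul_mk, smul_eq_mul] <;> ring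
  cases hab with
  | fan i x hxi =>
    cases hcd with
    | fan j y hyj =>
      obtain ⟨rfl, rfl⟩ := fan_inj ht hxi hyj hx
      exact .inl ⟨rfl, rfl⟩
    | up | down | across => simp only [apex] at hrow; omega
  | up x y hy =>
    cases hcd with
    | up x' =>
      obtain rfl : x = x' := by simpa using hx
      simp_all
    | down x' =>
      obtain ⟨rfl, rfl⟩ := antidiagonal_cross (x := x) (y := x') ht
        (by simpa [sub_eq_add_neg] using hx)
      simp_all
    | fan => simp only [apex] at hrow; omega
    | across => simp at hcd'
  | down x y hy =>
    cases hcd with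
    | down x' =>
      obtain rfl : x = x' := by simpa using hx
      simp_all
    | up x' =>
      obtain ⟨rfl, rfl⟩ := antidiagonal_cross (x := x') (y := x) ht
        (by simpa [sub_eq_add_neg] using hx.symm)
      simp_all
    | fan => simp only [apex] at hrow; omega
    | across => simp at hcd'
  | across => simp at hab'

lemma FanGridStep.eq_or_diagonals (hab : FanGridStep N a b) (hcd : FanGridStep N c d)
    (hz : z ∈ openSegment ℝ (latticePoint a) (latticePoint b))
    (hz' : z ∈ openSegment ℝ (latticePoint c) (latticePoint d)) :
    (c = a ∧ d = b) ∨ (c = (b.1, a.2) ∧ d = (a.1, b.2) ∧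
      z = midpoint ℝ (latticePoint a) (latticePoint b)) := by
  rcases hab.rises_or_across with hab' | rfl <;>
    rcases hcd.rises_or_across with hcd' | rfl
  · exact hab.eq_or_diagonals_of_rises hcd hab' hcd' hz hz'
  · exact (Set.disjoint_left.1 (disjoint_openSegment_across_rises hab') hz' hz).elim
  · exact (Set.disjoint_left.1 (disjoint_openSegment_across_rises hcd') hz hz').elim
  · obtain rfl := eq_of_mem_openSegment_across hz hz'
    exact .inl ⟨rfl, rfl⟩

end FanGrid

variable (N : ℤ)

lemma latticePoint_notMem_edgeSegment {e : Sym2 (ℤ × ℤ)} (he : e ∈ (fanGrid N).edgeSet)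
    (w : ℤ × ℤ) : latticePoint w ∉ edgeSegment latticePoint e := by
  obtain ⟨a, b, hab, rfl⟩ := exists_fanGridStep_of_mem_edgeSet he
  exact hab.latticePoint_notMem_openSegment w

lemma segmentCrossings_fanGrid_subsingleton {e : Sym2 (ℤ × ℤ)} (he : e ∈ (fanGrid N).edgeSet) :
    (segmentCrossings (fanGrid N) latticePoint e).Subsingleton := by
  obtain ⟨a, b, hab, rfl⟩ := exists_fanGridStep_of_mem_edgeSet he
  have crossing_eq : ∀ q ∈ segmentCrossings (fanGrid N) latticePoint s(a, b),
      q = (s((b.1, a.2), (a.1, b.2)), midpoint ℝ (latticePoint a) (latticePoint b)) := by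
    rintro ⟨f, z⟩ ⟨hf, hne, hz, hz'⟩
    obtain ⟨c, d, hcd, rfl⟩ := exists_fanGridStep_of_mem_edgeSet hf
    rcases hab.eq_or_diagonals hcd hz hz' with ⟨rfl, rfl⟩ | ⟨rfl, rfl, rfl⟩
    · exact (hne rfl).elim
    · rfl
  exact fun q hq q' hq' => (crossing_eq q hq).trans (crossing_eq q' hq').symm

theorem isNearlyPlanar_fanGrid_induce (S : Set (ℤ × ℤ)) :
    IsNearlyPlanar 1 ((fanGrid N).induce S) := by
  have map_mem {e : Sym2 S} (he : e ∈ ((fanGrid N).induce S).edgeSet) :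
      e.map (↑) ∈ (fanGrid N).edgeSet := by
    induction e with
    | _ a b => exact he
  refine isNearlyPlanar_of_encard_segmentCrossings_le (pos := latticePoint ∘ (↑))
    (latticePoint_injective.comp Subtype.val_injective) (fun e he v => ?_) (fun e he => ?_)
  · rw [← edgeSegment_map]
    exact latticePoint_notMem_edgeSegment N (map_mem he) v
  · have hval : Function.Injective (Sym2.map ((↑) : S → ℤ × ℤ)) :=
      Sym2.map.injective Subtype.val_injective
    refine Set.encard_le_one_iff_subsingleton.2 <|
      ((segmentCrossings_fanGrid_subsingleton N (map_mem he)).preimage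
        (hval.prodMap Function.injective_id)).anti ?_
    rintro ⟨f, z⟩ ⟨hf, hne, hz, hz'⟩
    exact ⟨map_mem hf, hval.ne hne, (edgeSegment_map _ _ e).symm ▸ hz,
      (edgeSegment_map _ _ f).symm ▸ hz'⟩

/-! ### Topological minors -/

theorem IsTopMinor.of_injective_hom {G : SimpleGraph U} {H : SimpleGraph V} {K : SimpleGraph W}
    (h : IsTopMinor H K) (f : G →g H) (hf : Function.Injective f) : IsTopMinor G K := by
  obtain ⟨τ, hτ, P, hpath, hbranch, hdisj⟩ := h
  refine ⟨τ ∘ f, hτ.comp hf, fun x y hxy => P (f.map_adj hxy), fun x y hxy => hpath _, ?_, ?_⟩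
  · rintro x y hxy _ hv ⟨z, rfl⟩
    exact hbranch _ _ hv ⟨f z, rfl⟩
  · intro x y x' y' hxy hxy' hne v hv hv'
    have hne' : s(f x, f y) ≠ s(f x', f y') := (Sym2.map.injective hf).ne hne
    rcases hbranch _ v hv (hdisj _ _ hne' v hv hv') with rfl | rfl
    exacts [⟨x, rfl⟩, ⟨y, rfl⟩]

theorem IsTopMinor.exists_finite_induce [Finite V] {G : SimpleGraph V} {H : SimpleGraph W}
    (h : IsTopMinor G H) : ∃ S : Set W, S.Finite ∧ IsTopMinor G (H.induce S) := by
  obtain ⟨τ, hτ, P, hpath, hbranch, hdisj⟩ := h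
  let S : Set W := Set.range τ ∪ ⋃ (x) (y) (hxy : G.Adj x y), {w | w ∈ (P hxy).support}
  have hS : S.Finite := (Set.finite_range τ).union <| Set.finite_iUnion fun x =>
    Set.finite_iUnion fun y => Set.finite_iUnion fun hxy => List.finite_toSet _
  have hPS {x y} (hxy : G.Adj x y) : ∀ w ∈ (P hxy).support, w ∈ S := fun w hw =>
    .inr (Set.mem_iUnion₂.2 ⟨x, y, Set.mem_iUnion.2 ⟨hxy, hw⟩⟩)
  have mem_support {x y} (hxy : G.Adj x y) {w : S}
      (hw : w ∈ ((P hxy).induce S (hPS hxy)).support) : ↑w ∈ (P hxy).support := by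
    simpa using hw
  refine ⟨S, hS, fun x => ⟨τ x, .inl ⟨x, rfl⟩⟩, fun x y hxy => hτ (congrArg Subtype.val hxy),
    fun x y hxy => (P hxy).induce S (hPS hxy), fun x y hxy => ?_, ?_, ?_⟩
  · refine SimpleGraph.Walk.IsPath.of_map (f := (SimpleGraph.Embedding.induce S).toHom) ?_
    rw [SimpleGraph.Walk.map_induce]
    exact hpath hxy
  · rintro x y hxy _ hv ⟨z, rfl⟩
    exact (hbranch hxy _ (mem_support hxy hv) ⟨z, rfl⟩).imp Subtype.ext Subtype.ext
  · intro x y x' y' hxy hxy' hne v hv hv'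
    obtain ⟨z, hz⟩ := hdisj hxy hxy' hne v (mem_support hxy hv) (mem_support hxy' hv')
    exact ⟨z, Subtype.ext hz⟩

lemma exists_isPath_of_preconnected_induce {H : SimpleGraph W} {T : Set W}
    (hT : (H.induce T).Preconnected) {u v : W} (hu : u ∈ T) (hv : v ∈ T) :
    ∃ p : H.Walk u v, p.IsPath ∧ ∀ w ∈ p.support, w ∈ T := by
  obtain ⟨p, hp⟩ := (hT ⟨u, hu⟩ ⟨v, hv⟩).exists_isPath
  refine ⟨p.map (SimpleGraph.Embedding.induce T).toHom, hp.map Subtype.val_injective, ?_⟩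
  intro w hw
  obtain ⟨w, -, rfl⟩ := List.mem_map.1 (SimpleGraph.Walk.support_map _ p ▸ hw)
  exact w.2

theorem isTopMinor_of_preconnected_tracks {G : SimpleGraph V} {H : SimpleGraph W} {τ : V → W}
    (hτ : Function.Injective τ) (T : Sym2 V → Set W)
    (hconn : ∀ e ∈ G.edgeSet, (H.induce (T e)).Preconnected)
    (hmem : ∀ e ∈ G.edgeSet, ∀ v, τ v ∈ T e ↔ v ∈ e)
    (hdisj : G.edgeSet.Pairwise fun e e' => T e ∩ T e' ⊆ Set.range τ) : IsTopMinor G H := by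
  have exists_path : ∀ x y, G.Adj x y →
      ∃ p : H.Walk (τ x) (τ y), p.IsPath ∧ ∀ w ∈ p.support, w ∈ T s(x, y) := fun x y hxy =>
    exists_isPath_of_preconnected_induce (hconn _ hxy)
      ((hmem _ hxy x).2 (Sym2.mem_mk_left x y)) ((hmem _ hxy y).2 (Sym2.mem_mk_right x y))
  choose P hpath hPT using exists_path
  refine ⟨τ, hτ, P, hpath, ?_, ?_⟩
  · rintro x y hxy _ hv ⟨z, rfl⟩
    have hz : z ∈ s(x, y) := (hmem _ hxy z).1 (hPT x y hxy _ hv)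
    exact (Sym2.mem_iff.1 hz).imp (congrArg τ) (congrArg τ)
  · intro x y x' y' hxy hxy' hne v hv hv'
    exact hdisj hxy hxy' hne ⟨hPT x y hxy v hv, hPT x' y' hxy' v hv'⟩

/-! ### Routing the complete graph in the fan grid -/

lemma connected_induce_range_of_adj_succ {H : SimpleGraph W} {f : ℕ → W}
    (hf : ∀ k, H.Adj (f k) (f (k + 1))) : (H.induce (Set.range f)).Connected := by
  rw [SimpleGraph.connected_iff_exists_forall_reachable]
  refine ⟨⟨f 0, 0, rfl⟩, ?_⟩
  rintro ⟨_, k, rfl⟩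
  induction k with
  | zero => rfl
  | succ k ih =>
    have hadj : (H.induce (Set.range f)).Adj ⟨f k, k, rfl⟩ ⟨f (k + 1), k + 1, rfl⟩ := hf k
    exact ih.trans hadj.reachable

/-- The lattice point at height `k` on the ray starting at the port `c`. -/
def rayPoint (c : ℤ) (k : ℕ) : ℤ × ℤ := (if Even c then c + k else c - k, k)

/-- The diagonal ray from the port `(c, 0)`, which leads to the right if `c` is even and to the left
if `c` is odd. It visits lattice points with coordinate sum of the same parity as `c` only. -/
def ray (c : ℤ) : Set (ℤ × ℤ) := Set.range (rayPoint c)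

lemma port_mem_ray (c : ℤ) : (c, 0) ∈ ray c := ⟨0, by simp [rayPoint]⟩

lemma apex_notMem_ray (i c : ℤ) : apex N i ∉ ray c := by
  rintro ⟨k, hk⟩
  simp only [rayPoint, apex, Prod.mk.injEq] at hk
  omega

lemma ray_connected (c : ℤ) : ((fanGrid N).induce (ray c)).Connected := by
  refine connected_induce_range_of_adj_succ fun k => ?_
  rcases em (Even c) with hc | hc
  · simpa [rayPoint, hc, add_assoc] using (FanGridStep.up (N := N) (c + k) k (by positivity)).adj
  · simpa [rayPoint, hc, ← sub_sub] using
      (FanGridStep.down (N := N) (c - k - 1) k (by positivity)).adj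

lemma ray_index_eq {c d : ℤ} {w : ℤ × ℤ} (hc : w ∈ ray c) (hd : w ∈ ray d) : c = d := by
  obtain ⟨k, rfl⟩ := hc
  obtain ⟨l, hl⟩ := hd
  simp only [rayPoint, Int.even_iff, Prod.mk.injEq] at hl
  grind

lemma exists_adj_ray_ray {c d : ℤ} (hc : Even c) (hd : Odd d) (hcd : c < d) :
    ∃ v ∈ ray c, ∃ w ∈ ray d, (fanGrid N).Adj v w := by
  obtain ⟨k, rfl⟩ : ∃ k : ℕ, d = c + 1 + 2 * k := by
    refine ⟨((d - c) / 2).toNat, ?_⟩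
    grind
  refine ⟨(c + k, k), ⟨k, by simp [rayPoint, hc]⟩, (c + k + 1, k), ⟨k, ?_⟩,
    (FanGridStep.across _ _ (by positivity)).adj⟩
  simp only [rayPoint, Int.not_even_iff_odd.2 hd, if_false, Prod.mk.injEq, and_true]
  ring

section Routing

variable {n : ℕ}

/-- The abscissa of the port at which the edge `ij` leaves the apex `i`: one of the `2 * n` ports of
`i`, even if the edge leads to the right and odd if it leads to the left. -/
def port (i j : Fin n) : ℤ := 2 * (n * i + j) + if i < j then 0 else 1

lemma port_mem_Ico (i j : Fin n) : port i j ∈ Set.Ico (2 * n * i : ℤ) (2 * n * i + 2 * n) := by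
  have hj : (j : ℤ) < n := by exact_mod_cast j.2
  constructor <;> unfold port <;> split_ifs <;> linarith [(j : ℕ).cast_nonneg (α := ℤ)]

lemma port_lt_port {i j : Fin n} (hij : i < j) : port i j < port j i := by
  have hij' : (i : ℤ) + 1 ≤ j := by exact_mod_cast hij
  have hn : (1 : ℤ) ≤ n := by exact_mod_cast i.pos
  simp only [port, hij, hij.not_gt, if_true, if_false]
  nlinarith

lemma port_inj {i j i' j' : Fin n} (h : port i j = port i' j') : i = i' ∧ j = j' := by
  have hcode : finProdFinEquiv (i, j) = finProdFinEquiv (i', j') := by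
    ext
    simp only [port] at h
    simp only [finProdFinEquiv_apply_val]
    zify
    grind
  simpa using hcode

/-- The part of the route of the edge `ij` that is closer to the apex `i`, prolonged to an
infinite ray. -/
def limb (i j : Fin n) : Set (ℤ × ℤ) := insert (apex (2 * n) i) (ray (port i j))

/-- The route of an edge of the complete graph: two infinite rays, each with its apex. -/
def track : Sym2 (Fin n) → Set (ℤ × ℤ) :=
  Sym2.lift ⟨fun i j => limb i j ∪ limb j i, fun _ _ => Set.union_comm _ _⟩

lemma track_mk (i j : Fin n) : track s(i, j) = limb i j ∪ limb j i := rfl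

lemma apex_injective : Function.Injective fun i : Fin n => apex (2 * n) i := by
  intro i j h
  have hn : n ≠ 0 := i.pos.ne'
  simpa [apex, hn, Fin.ext_iff] using h

lemma apex_mem_limb_iff {i j v : Fin n} : apex (2 * n) v ∈ limb i j ↔ v = i := by
  simp [limb, apex_notMem_ray, apex_injective.eq_iff]

lemma apex_mem_track_iff {v : Fin n} {e : Sym2 (Fin n)} : apex (2 * n) v ∈ track e ↔ v ∈ e := by
  induction e with
  | _ i j => simp [track_mk, apex_mem_limb_iff]

lemma limb_connected (i j : Fin n) : ((fanGrid (2 * n)).induce (limb i j)).Connected := by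
  rw [limb, Set.insert_eq]
  exact SimpleGraph.connected_induce_union (by simp) (ray_connected _ _).preconnected
    (Set.mem_singleton _) (port_mem_ray _) (FanGridStep.fan i _ (port_mem_Ico i j)).adj

lemma track_connected {e : Sym2 (Fin n)} (he : ¬ e.IsDiag) :
    ((fanGrid (2 * n)).induce (track e)).Connected := by
  induction e with
  | _ i j =>
    wlog hij : i < j generalizing i j
    · rw [Sym2.eq_swap] at he ⊢
      exact this j i he (lt_of_le_of_ne (not_lt.1 hij) (by simpa using he))
    obtain ⟨v, hv, w, hw, hvw⟩ := exists_adj_ray_ray (2 * n) (c := port i j) (d := port j i)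
      (by simp [port, hij]) (by simp [port, hij.not_gt]) (port_lt_port hij)
    exact SimpleGraph.connected_induce_union (limb_connected i j).preconnected
      (limb_connected j i).preconnected (Set.mem_insert_of_mem _ hv) (Set.mem_insert_of_mem _ hw)
      hvw

lemma limb_inter_limb_subset {i j i' j' : Fin n} (h : (i, j) ≠ (i', j')) :
    limb i j ∩ limb i' j' ⊆ Set.range fun v : Fin n => apex (2 * n) v := by
  rintro w ⟨rfl | hw, hw'⟩
  · exact ⟨i, rfl⟩
  rcases hw' with rfl | hw'
  · exact ⟨i', rfl⟩
  · exact (h (Prod.ext_iff.2 (port_inj (ray_index_eq hw hw')))).elim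

lemma track_inter_track_subset {e e' : Sym2 (Fin n)} (h : e ≠ e') :
    track e ∩ track e' ⊆ Set.range fun v : Fin n => apex (2 * n) v := by
  induction e with
  | _ i j =>
    induction e' with
    | _ i' j' =>
      rintro w ⟨hw | hw, hw' | hw'⟩ <;>
        exact limb_inter_limb_subset (by grind) ⟨hw, hw'⟩

theorem isTopMinor_top_fanGrid (n : ℕ) :
    IsTopMinor (⊤ : SimpleGraph (Fin n)) (fanGrid (2 * n)) :=
  isTopMinor_of_preconnected_tracks apex_injective track
    (fun _ he => (track_connected (SimpleGraph.not_isDiag_of_mem_edgeSet _ he)).preconnected)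
    (fun _ _ _ => apex_mem_track_iff) (fun _ _ _ _ hne => track_inter_track_subset hne)

end Routing

end WBW

/-- every graph is a topological minor of some 1-nearly planar graph. -/
theorem topMinor_of_oneNearlyPlanar (V : Type) [Finite V] (G : SimpleGraph V) :
    ∃ (W : Type) (_ : Finite W) (G' : SimpleGraph W),
      WBW.IsNearlyPlanar 1 G' ∧ WBW.IsTopMinor G G' := by
  obtain ⟨n, ⟨f⟩⟩ := Finite.exists_equiv_fin V
  let g : G →g (⊤ : SimpleGraph (Fin n)) := ⟨f, fun hxy => f.injective.ne hxy.ne⟩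
  obtain ⟨S, hS, hminor⟩ :=
    ((WBW.isTopMinor_top_fanGrid n).of_injective_hom g f.injective).exists_finite_induce
  exact ⟨S, hS.to_subtype, _, WBW.isNearlyPlanar_fanGrid_induce (2 * n) S, hminor⟩
end

section
/- For every positive integer n there exists a 2-flat graph G_n that contains the complete graph K_n as a topological minor. (Concretely, G_n is obtained from an embedding of K_n in which at most two edges cross at any point and each edge is crossed at most once after subdivision, by adding, for each crossing pair of edges {x,y} and {u,v}, the 4-cycle x u y v; the plane graph H_n obtained by further deleting all crossing pairs of edges satisfies G_n ⊆ H_n², since wbw_{H_n}(x,y) = 2 and wbw_{H_n}(u,v) = 2 for every deleted crossing pair.) -/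
/-!
A plane quadrangulation `H` yields a crossing in `H²` inside each of its faces: opposite corners
of a face are at wall-by-wall distance at most 2. So it suffices to draw `K_n` with every crossing
placed inside a face of a quadrangulation. We use a drum: concentric rings of sites between a
north and a south pole, the topmost ring being joined to `m` hubs around the north pole, with one
column of sites for every ordered pair of hubs. The edge of `K_n` between the hubs `i` and `j`
descends from each of them along the corresponding column, visiting rings of even index only, down
to an odd ring reserved for the pair `{i, j}`, which joins the two columns. A column crosses the
odd rings through diagonals of faces, so it never meets the sites used by other pairs.
-/

namespace WBW

section PlaneGraphs

variable {V : Type*}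

theorem RotationSystem.power_two_adj {R : RotationSystem V} {v x y : V} (hx : R.G.Adj v x)
    (hrot : R.rot v s(v, x) = s(v, y)) (hxy : x ≠ y) : (R.power 2).Adj x y := by
  have hx_inc : s(v, x) ∈ incidentSet R.G v := ⟨hx, Sym2.mem_mk_left v x⟩
  have hy_inc : s(v, y) ∈ incidentSet R.G v := hrot ▸ (R.rot_cycleOn v).1.mapsTo hx_inc
  refine Or.inr ⟨hxy, Or.inl (sInf_le ⟨[s(v, x), s(v, y)], ⟨⟨by simp, ?_, ?_, ?_⟩,
    ⟨_, rfl, Sym2.mem_mk_right v x⟩, ⟨_, rfl, Sym2.mem_mk_right v y⟩⟩, by simp⟩)⟩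
  · simpa using fun h => hxy (Sym2.congr_right.1 h)
  · simpa using And.intro hx_inc.1 hy_inc.1
  · exact List.isChain_pair.2 ⟨v, hx_inc, hy_inc, Or.inl hrot⟩

theorem RotationSystem.IsPlane.isFlat_power {W : Type} [Finite W] {R : RotationSystem W}
    (hR : R.IsPlane) (l : ℕ) : IsFlat l (R.power l) :=
  ⟨W, inferInstance, R, id, hR, Function.injective_id, fun _ _ h => h⟩

theorem RotationSystem.isPlane_of_connected [Nontrivial V] {R : RotationSystem V}
    (hR : R.G.Connected) (euler : Nat.card V + R.numFaces = Nat.card R.G.edgeSet + 2) :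
    R.IsPlane := by
  have := hR.preconnected.subsingleton_connectedComponent
  have := hR.nonempty.map R.G.connectedComponentMk
  have : IsEmpty {v : V | ∀ w, ¬ R.G.Adj v w} := ⟨fun ⟨v, hv⟩ =>
    let ⟨w, hw⟩ := hR.preconnected.exists_adj_of_nontrivial v
    hv w hw⟩
  rw [RotationSystem.IsPlane, Nat.card_unique (α := R.G.ConnectedComponent),
    Nat.card_of_isEmpty (α := {v : V | ∀ w, ¬ R.G.Adj v w}), euler]

theorem isTopMinor_of_preconnected_regions {U : Type*} {H : SimpleGraph U} {G : SimpleGraph V}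
    {τ : U → V} (hτ : Function.Injective τ) (region : Sym2 U → Set V)
    (connected : ∀ e ∈ H.edgeSet, (G.induce (region e)).Preconnected)
    (branch : ∀ e ∈ H.edgeSet, ∀ u, τ u ∈ region e ↔ u ∈ e)
    (disjoint : ∀ e ∈ H.edgeSet, ∀ e' ∈ H.edgeSet, e ≠ e' → region e ∩ region e' ⊆ Set.range τ) :
    IsTopMinor H G := by
  classical
  have exists_path : ∀ x y, H.Adj x y → ∃ p : G.Walk (τ x) (τ y),
      p.IsPath ∧ ∀ v ∈ p.support, v ∈ region s(x, y) := by
    intro x y h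
    obtain ⟨p⟩ := connected s(x, y) h ⟨τ x, (branch _ h x).2 (Sym2.mem_mk_left x y)⟩
      ⟨τ y, (branch _ h y).2 (Sym2.mem_mk_right x y)⟩
    refine ⟨_, (p.map (SimpleGraph.Embedding.induce (region s(x, y))).toHom).bypass_isPath,
      fun v hv => ?_⟩
    obtain ⟨w, -, rfl⟩ := List.mem_map.1 (p.support_map _ ▸
      SimpleGraph.Walk.support_bypass_subset_support _ hv)
    exact w.2
  choose P hpath hregion using exists_path
  refine ⟨τ, hτ, P, hpath, ?_, ?_⟩
  · rintro x y h _ hv ⟨u, rfl⟩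
    have hu := (branch _ h u).1 (hregion x y h _ hv)
    exact (Sym2.mem_iff.1 hu).imp (congrArg τ) (congrArg τ)
  · exact fun x y x' y' h h' hne v hv hv' =>
      disjoint _ h _ h' hne ⟨hregion x y h v hv, hregion x' y' h' v hv'⟩

end PlaneGraphs

/-- A combinatorial map whose underlying graph is simple: the dart `d` points from `tail d` to
`tail (rev d)`, and is followed by `face d` on the boundary of the face on its left. Turning around
a vertex is then `face ∘ rev`, and `sameCycle` says that the vertices are the orbits of this
rotation. -/
structure CombinatorialMap (V D : Type*) where
  tail : D → V
  rev : D → D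
  face : Equiv.Perm D
  rev_rev : Function.Involutive rev
  tail_face : ∀ d, tail (face d) = tail (rev d)
  tail_ne_tail_rev : ∀ d, tail d ≠ tail (rev d)
  dart_ext : ∀ ⦃d d'⦄, tail d = tail d' → tail (rev d) = tail (rev d') → d = d'
  sameCycle : ∀ ⦃d d'⦄, tail d = tail d' → (face * rev_rev.toPerm).SameCycle d d'

namespace CombinatorialMap

variable {V D : Type*} (M : CombinatorialMap V D)

/-- The rotation of a combinatorial map: the next dart around the tail of a dart. -/
def rot : Equiv.Perm D := M.face * M.rev_rev.toPerm

theorem rot_apply (d : D) : M.rot d = M.face (M.rev d) := rfl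

theorem rot_rev (d : D) : M.rot (M.rev d) = M.face d := by rw [rot_apply, M.rev_rev]

theorem tail_rot (d : D) : M.tail (M.rot d) = M.tail d := by
  rw [rot_apply, M.tail_face, M.rev_rev]

/-- The underlying graph of a combinatorial map. -/
def graph : SimpleGraph V where
  Adj u v := ∃ d, M.tail d = u ∧ M.tail (M.rev d) = v
  symm := ⟨fun _ _ ⟨d, hu, hv⟩ => ⟨M.rev d, hv, by rw [M.rev_rev, hu]⟩⟩
  loopless := ⟨fun _ ⟨d, hu, hv⟩ => M.tail_ne_tail_rev d (hu.trans hv.symm)⟩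

theorem adj_tail_rev (d : D) : M.graph.Adj (M.tail d) (M.tail (M.rev d)) := ⟨d, rfl, rfl⟩

/-- The edge carrying a dart. -/
def edge (d : D) : Sym2 V := s(M.tail d, M.tail (M.rev d))

theorem edge_rev (d : D) : M.edge (M.rev d) = M.edge d := by
  rw [edge, M.rev_rev, Sym2.eq_swap, edge]

/-- The darts leaving `v`, identified with the edges they carry. -/
def edgeEmbedding (v : V) : {d : D // M.tail d = v} ↪ Sym2 V where
  toFun d := M.edge d
  inj' := by
    rintro ⟨d, rfl⟩ ⟨d', hd'⟩ h
    change M.edge d = M.edge d' at h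
    rw [edge, edge, hd'] at h
    exact Subtype.ext (M.dart_ext hd'.symm (Sym2.congr_right.1 h))

theorem incidentSet_graph (v : V) :
    incidentSet M.graph v = Set.range (M.edgeEmbedding v) := by
  ext e
  constructor
  · induction e with | _ x y =>
    rintro ⟨⟨d, rfl, rfl⟩, hv⟩
    rcases Sym2.mem_iff.1 hv with rfl | rfl
    · exact ⟨⟨d, rfl⟩, rfl⟩
    · exact ⟨⟨M.rev d, rfl⟩, M.edge_rev d⟩
  · rintro ⟨⟨d, rfl⟩, rfl⟩
    exact ⟨M.adj_tail_rev d, Sym2.mem_mk_left _ _⟩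

/-- The rotation at `v`, acting on the darts leaving `v`. -/
def rotAt (v : V) : Equiv.Perm {d : D // M.tail d = v} :=
  M.rot.subtypePerm fun d => by rw [M.tail_rot]

theorem rotAt_isCycleOn (v : V) : (M.rotAt v).IsCycleOn Set.univ :=
  ⟨Set.bijOn_univ.2 (M.rotAt v).bijective, fun d _ d' _ =>
    Equiv.Perm.sameCycle_subtypePerm.2 (M.sameCycle (d.2.trans d'.2.symm))⟩

/-- The rotation system of a combinatorial map. -/
noncomputable def rotationSystem : RotationSystem V where
  G := M.graph
  rot v := (M.rotAt v).viaEmbedding (M.edgeEmbedding v)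
  rot_cycleOn v := by
    classical
    rw [M.incidentSet_graph, ← Set.image_univ]
    exact (M.rotAt_isCycleOn v).extendDomain
      (Equiv.ofInjective (M.edgeEmbedding v) (M.edgeEmbedding v).injective)
  rot_fixed v e he :=
    (M.rotAt v).viaEmbedding_apply_of_notMem _ _ (M.incidentSet_graph v ▸ he)

theorem rotationSystem_rot_edge (d : D) :
    M.rotationSystem.rot (M.tail d) (M.edge d) = M.edge (M.rot d) :=
  (M.rotAt (M.tail d)).viaEmbedding_apply (M.edgeEmbedding (M.tail d)) ⟨d, rfl⟩

theorem rotationSystem_rot_face (d : D) :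
    M.rotationSystem.rot (M.tail (M.face d)) s(M.tail (M.face d), M.tail d) =
      s(M.tail (M.face d), M.tail (M.face (M.face d))) := by
  have h := M.rotationSystem_rot_edge (M.rev d)
  rwa [M.rot_rev, edge, edge, M.rev_rev, ← M.tail_face, ← M.tail_face] at h

theorem adj_tail_face (d : D) : M.graph.Adj (M.tail d) (M.tail (M.face d)) :=
  M.tail_face d ▸ M.adj_tail_rev d

theorem power_two_adj_tail_face_face {d : D} (hd : M.tail d ≠ M.tail (M.face (M.face d))) :
    (M.rotationSystem.power 2).Adj (M.tail d) (M.tail (M.face (M.face d))) :=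
  RotationSystem.power_two_adj (M.adj_tail_face d).symm (M.rotationSystem_rot_face d) hd

/-- The darts of a combinatorial map are those of its underlying graph. -/
noncomputable def dartEquiv : D ≃ M.rotationSystem.G.Dart :=
  Equiv.ofBijective (fun d => ⟨(M.tail d, M.tail (M.rev d)), M.adj_tail_rev d⟩) <| by
    constructor
    · intro d d' h
      obtain ⟨h_tail, h_head⟩ := Prod.ext_iff.1 (congrArg SimpleGraph.Dart.toProd h)
      exact M.dart_ext h_tail h_head
    · rintro ⟨⟨u, v⟩, d, hu, hv⟩
      exact ⟨d, SimpleGraph.Dart.ext _ _ (Prod.ext hu hv)⟩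

theorem faceNext_dartEquiv (d : D) :
    M.rotationSystem.faceNext (M.dartEquiv d) = M.dartEquiv (M.face d) := by
  refine SimpleGraph.Dart.ext _ _ (Prod.ext (M.tail_face d).symm ?_)
  have h := M.rotationSystem_rot_edge (M.rev d)
  rw [M.rot_rev, M.edge_rev, edge, edge, M.tail_face] at h
  exact Sym2.congr_right.1 ((Sym2.other_spec _).trans h)

theorem card_edgeSet [Finite V] :
    2 * Nat.card M.rotationSystem.G.edgeSet = Nat.card D := by
  classical
  have := Fintype.ofFinite V
  rw [Nat.card_congr M.dartEquiv, Nat.card_eq_fintype_card, Nat.card_eq_fintype_card,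
    SimpleGraph.dart_card_eq_twice_card_edges, SimpleGraph.edgeFinset_card]

theorem numFaces_eq_card {F : Type*} {f : D → F} (hf : Function.Surjective f)
    (f_face : ∀ d, f (M.face d) = f d)
    (sameCycle_face : ∀ d d', f d = f d' → M.face.SameCycle d d') :
    M.rotationSystem.numFaces = Nat.card F := by
  let r : D → D → Prop := fun d d' => M.face d = d'
  have mk_zpow (d : D) (i : ℤ) : Quot.mk r ((M.face ^ i) d) = Quot.mk r d := by
    have mk_face (d : D) : Quot.mk r (M.face d) = Quot.mk r d := (Quot.sound (r := r) rfl).symm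
    induction i with
    | zero => rfl
    | succ i ih => rw [add_comm, zpow_one_add, Equiv.Perm.mul_apply, mk_face, ih]
    | pred i ih =>
      rw [← ih, ← mk_face, ← Equiv.Perm.mul_apply, ← zpow_one_add, add_sub_cancel]
  let g : Quot r → F := Quot.lift f fun d d' h => h ▸ (f_face d).symm
  have g_injective : Function.Injective g := by
    rintro ⟨d⟩ ⟨d'⟩ h
    obtain ⟨i, rfl⟩ := sameCycle_face d d' h
    exact (mk_zpow d i).symm
  have g_surjective : Function.Surjective g := fun x => (hf x).imp' (Quot.mk r) fun _ h => h
  rw [← Nat.card_congr (Equiv.ofBijective g ⟨g_injective, g_surjective⟩)]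
  refine (Nat.card_congr (Quot.congr M.dartEquiv fun d d' => ?_)).symm
  rw [M.faceNext_dartEquiv, M.dartEquiv.injective.eq_iff]

end CombinatorialMap

section Columns

variable {m : ℕ}

theorem zmod_induction [NeZero m] {P : ZMod m → Prop} (zero : P 0)
    (succ : ∀ j, j + 1 ≠ 0 → P j → P (j + 1)) (j : ZMod m) : P j := by
  obtain ⟨k, rfl⟩ := ZMod.natCast_zmod_surjective j
  induction k with
  | zero => simpa using zero
  | succ k ih =>
    rw [Nat.cast_succ]
    by_cases hk : (k : ZMod m) + 1 = 0
    · exact hk ▸ zero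
    · exact succ _ hk ih

theorem natCast_ne_zero {k : ℕ} (hk : 0 < k) (hkm : k < m) : (k : ZMod m) ≠ 0 := by
  rw [Ne, ZMod.natCast_eq_zero_iff]
  exact Nat.not_dvd_of_pos_of_lt hk hkm

/-- The positions around the drum, one column for every ordered pair of hubs. -/
abbrev Column (m : ℕ) : Type := ZMod m × ZMod m

/-- The next column around the drum: the cyclic order is the lexicographic one. -/
def shift : Equiv.Perm (Column m) where
  toFun a := (if a.2 = -1 then a.1 + 1 else a.1, a.2 + 1)
  invFun a := (if a.2 = 0 then a.1 - 1 else a.1, a.2 - 1)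
  left_inv a := by ext <;> grind
  right_inv a := by ext <;> grind

@[simp]
theorem shift_fst (a : Column m) : (shift a).1 = if a.2 = -1 then a.1 + 1 else a.1 := rfl

@[simp]
theorem shift_snd (a : Column m) : (shift a).2 = a.2 + 1 := rfl

@[simp]
theorem shift_symm_fst (a : Column m) :
    (shift.symm a).1 = if a.2 = 0 then a.1 - 1 else a.1 := rfl

@[simp]
theorem shift_symm_snd (a : Column m) : (shift.symm a).2 = a.2 - 1 := rfl

theorem shift_ne_self [Fact (1 < m)] (a : Column m) : shift a ≠ a := fun h => by
  simpa using congrArg Prod.snd h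

theorem column_induction [NeZero m] {P : Column m → Prop} (zero : P 0)
    (succ : ∀ a, P a → P (shift a)) (a : Column m) : P a := by
  have block (i : ZMod m) (hi : P (i, 0)) (j : ZMod m) : P (i, j) := by
    refine zmod_induction (P := fun j => P (i, j)) hi (fun j hj h => ?_) j
    have h_succ := succ (i, j) h
    rwa [show shift (i, j) = (i, j + 1) by
      ext <;> grind [shift_fst, shift_snd]] at h_succ
  refine block a.1 (zmod_induction (P := fun i => P (i, 0)) zero (fun i _ h => ?_) a.1) a.2
  have h_succ := succ (i, -1) (block i h (-1))
  rwa [show shift (i, -1) = (i + 1, 0) by ext <;> grind [shift_fst, shift_snd]] at h_succ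

end Columns

namespace Drum

variable {m : ℕ}

/-- The vertices of the drum: its two poles, the hubs around the north pole, and the sites of the
rings below the hubs. -/
inductive Vertex (m : ℕ)
  | north
  | south
  | hub (i : ZMod m)
  | site (ℓ : ZMod m) (a : Column m)

/-- The faces of the drum: the caps between consecutive hubs, and the faces `quad ℓ a` having
two consecutive sites of the ring `ℓ` as opposite corners. -/
inductive Face (m : ℕ)
  | cap (i : ZMod m)
  | quad (ℓ : ZMod m) (a : Column m)

/-- The corners of a face. -/
inductive Corner
  | top
  | left
  | bottom
  | right

instance : Fintype Corner where
  elems := ⟨{.top, .left, .bottom, .right}, by simp⟩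
  complete c := by cases c <;> simp

/-- The darts of the drum: a face, and the corner of it from which the dart leaves. -/
abbrev Dart (m : ℕ) : Type := Face m × Corner

open Vertex Face Corner

/-- The counterclockwise order of the corners of a face. -/
def Corner.next : Equiv.Perm Corner where
  toFun | top => left | left => bottom | bottom => right | right => top
  invFun | top => right | left => top | bottom => left | right => bottom
  left_inv c := by cases c <;> rfl
  right_inv c := by cases c <;> rfl

/-- The vertex of the drum at a given corner of a given face. -/
def tail : Dart m → Vertex m
  | (cap _, top) => north
  | (cap i, left) => hub i
  | (cap i, bottom) => site 0 (i + 1, 0)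
  | (cap i, right) => hub (i + 1)
  | (quad ℓ a, top) => if ℓ = 0 then hub a.1 else site (ℓ - 1) a
  | (quad ℓ a, left) => site ℓ a
  | (quad ℓ a, bottom) => if ℓ = -1 then south else site (ℓ + 1) (shift a)
  | (quad ℓ a, right) => site ℓ (shift a)

/-- The dart opposite to a given one, on the neighbouring face. -/
def rev : Dart m → Dart m
  | (cap i, top) => (cap (i - 1), right)
  | (cap i, left) => (quad 0 (i, -1), right)
  | (cap i, bottom) => (quad 0 (i + 1, 0), top)
  | (cap i, right) => (cap (i + 1), top)
  | (quad ℓ a, top) =>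
    if ℓ = 0 then if a.2 = 0 then (cap (a.1 - 1), bottom) else (quad 0 (shift.symm a), right)
    else (quad (ℓ - 1) (shift.symm a), bottom)
  | (quad ℓ a, left) =>
    if ℓ = -1 then (quad (-1) (shift.symm a), bottom) else (quad (ℓ + 1) a, right)
  | (quad ℓ a, bottom) =>
    if ℓ = -1 then (quad (-1) (shift a), left) else (quad (ℓ + 1) (shift a), top)
  | (quad ℓ a, right) =>
    if ℓ = 0 then if a.2 = -1 then (cap a.1, left) else (quad 0 (shift a), top)
    else (quad (ℓ - 1) a, left)

/-- The next dart on the boundary of the face of a dart. -/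
def face : Equiv.Perm (Dart m) := (Equiv.refl (Face m)).prodCongr next

@[simp]
theorem face_mk (f : Face m) (c : Corner) : face (f, c) = (f, next c) := rfl

theorem rev_rev : Function.Involutive (rev (m := m)) := by
  rintro ⟨_ | ⟨ℓ, i, j⟩, _ | _ | _ | _⟩
  case quad.top => by_cases hℓ : ℓ = 0 <;> by_cases hj : j = 0 <;> simp [rev, *]
  case quad.left => by_cases hℓ : ℓ = -1 <;> simp [rev, add_eq_zero_iff_eq_neg, *]
  case quad.bottom => by_cases hℓ : ℓ = -1 <;> simp [rev, add_eq_zero_iff_eq_neg, *]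
  case quad.right =>
    by_cases hℓ : ℓ = 0 <;> by_cases hj : j = -1 <;> simp [rev, add_eq_zero_iff_eq_neg, *]
  all_goals simp [rev]

theorem tail_face (d : Dart m) : tail (face d) = tail (rev d) := by
  rcases d with ⟨_ | ⟨ℓ, i, j⟩, _ | _ | _ | _⟩
  case quad.top => by_cases hℓ : ℓ = 0 <;> by_cases hj : j = 0 <;> simp [tail, rev, next, *]
  case quad.left => by_cases hℓ : ℓ = -1 <;> simp [tail, rev, next, *]
  case quad.bottom =>
    by_cases hℓ : ℓ = -1 <;> simp [tail, rev, next, add_eq_zero_iff_eq_neg, *]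
  case quad.right => by_cases hℓ : ℓ = 0 <;> by_cases hj : j = -1 <;> simp [tail, rev, next, *]
  all_goals simp [tail, rev, next, Prod.ext_iff]

/-- The rotation of the drum. -/
def turn : Equiv.Perm (Dart m) := face * rev_rev.toPerm

theorem turn_apply (d : Dart m) : turn d = face (rev d) := rfl

theorem tail_turn (d : Dart m) : tail (turn d) = tail d := by
  rw [turn_apply, tail_face, rev_rev]

/-- A chosen dart leaving a given vertex. -/
def base : Vertex m → Dart m
  | north => (cap 0, top)
  | south => (quad (-1) 0, bottom)
  | hub i => (cap i, left)
  | site ℓ a => (quad ℓ a, left)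

/-- A dart in the orbit, under the rotation, of the chosen dart with the same tail. -/
def IsReached (d : Dart m) : Prop := turn.SameCycle (base (tail d)) d

theorem isReached_iff_of_turn_eq {d d' : Dart m} (h : turn d = d') :
    IsReached d ↔ IsReached d' := by
  rw [← h, IsReached, IsReached, tail_turn, Equiv.Perm.sameCycle_apply_right]

theorem isReached_base {d : Dart m} (h : base (tail d) = d) : IsReached d := by
  rw [IsReached, h]

theorem isReached_left (f : Face m) : IsReached (f, left) := by
  cases f <;> exact isReached_base rfl

theorem isReached_cap_bottom (i : ZMod m) : IsReached (cap i, bottom) :=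
  (isReached_iff_of_turn_eq rfl).2 (isReached_left (quad 0 (i + 1, 0)))

theorem isReached_cap_right (i : ZMod m) : IsReached (cap i, right) :=
  (isReached_iff_of_turn_eq rfl).2 (isReached_left (cap (i + 1)))

theorem isReached_cap_top [NeZero m] (i : ZMod m) : IsReached (cap i, top) :=
  zmod_induction (P := fun i => IsReached (cap i, top)) (isReached_base rfl)
    (fun _ _ => (isReached_iff_of_turn_eq (by simp [turn_apply, rev, next])).2) i

theorem isReached_quad_bottom [NeZero m] (ℓ : ZMod m) (a : Column m) :
    IsReached (quad ℓ a, bottom) := by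
  by_cases hℓ : ℓ = -1
  · subst hℓ
    exact column_induction (P := fun a => IsReached (quad (-1) a, bottom))
      (isReached_base (by simp [tail, base]))
      (fun a => (isReached_iff_of_turn_eq (by simp [turn_apply, rev, next])).1) a
  · exact (isReached_iff_of_turn_eq (by simp [turn_apply, rev, next, hℓ])).2
      (isReached_left (quad (ℓ + 1) (shift a)))

theorem isReached_quad_right [NeZero m] (ℓ : ZMod m) (a : Column m) :
    IsReached (quad ℓ a, right) := by
  by_cases hℓ : ℓ = 0
  · by_cases ha : a.2 = -1
    · exact (isReached_iff_of_turn_eq (by simp [turn_apply, rev, next, hℓ, ha])).2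
        (isReached_cap_bottom a.1)
    · exact (isReached_iff_of_turn_eq (by simp [turn_apply, rev, next, hℓ, ha])).2
        (isReached_left (quad 0 (shift a)))
  · exact (isReached_iff_of_turn_eq (by simp [turn_apply, rev, next, hℓ])).2
      (isReached_quad_bottom (ℓ - 1) a)

theorem isReached_quad_top [NeZero m] (ℓ : ZMod m) (a : Column m) :
    IsReached (quad ℓ a, top) := by
  by_cases hℓ : ℓ = 0
  · obtain ⟨i, j⟩ := a
    subst hℓ
    refine zmod_induction (P := fun j => IsReached (quad 0 (i, j), top)) ?_ (fun j hj => ?_) j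
    · exact (isReached_iff_of_turn_eq (by simp [turn_apply, rev, next])).2
        (isReached_cap_right (i - 1))
    · exact (isReached_iff_of_turn_eq (by simp [turn_apply, rev, next, hj, Prod.ext_iff])).2
  · exact (isReached_iff_of_turn_eq (by simp [turn_apply, rev, next, hℓ])).2
      (isReached_quad_right (ℓ - 1) (shift.symm a))

theorem isReached [NeZero m] : ∀ d : Dart m, IsReached d
  | (cap i, top) => isReached_cap_top i
  | (cap i, bottom) => isReached_cap_bottom i
  | (cap i, right) => isReached_cap_right i
  | (quad ℓ a, top) => isReached_quad_top ℓ a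
  | (quad ℓ a, bottom) => isReached_quad_bottom ℓ a
  | (quad ℓ a, right) => isReached_quad_right ℓ a
  | (f, left) => isReached_left f

theorem sameCycle_turn [NeZero m] ⦃d d' : Dart m⦄ (h : tail d = tail d') :
    turn.SameCycle d d' := by
  have hd : turn.SameCycle (base (tail d)) d := isReached d
  exact hd.symm.trans (h ▸ isReached d')

theorem sameCycle_face ⦃d d' : Dart m⦄ (h : d.1 = d'.1) : face.SameCycle d d' := by
  have top_sameCycle : ∀ d : Dart m, face.SameCycle (d.1, top) d
    | (_, top) => ⟨0, rfl⟩
    | (_, left) => ⟨1, rfl⟩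
    | (_, bottom) => ⟨2, rfl⟩
    | (_, right) => ⟨3, rfl⟩
  exact (top_sameCycle d).symm.trans (h ▸ top_sameCycle d')

/-- Each vertex other than the poles is matched with a face. -/
def vertexEquiv : Vertex m ≃ Face m ⊕ Bool where
  toFun
    | north => .inr true
    | south => .inr false
    | hub i => .inl (cap i)
    | site ℓ a => .inl (quad ℓ a)
  invFun
    | .inl (cap i) => hub i
    | .inl (quad ℓ a) => site ℓ a
    | .inr true => north
    | .inr false => south
  left_inv v := by cases v <;> rfl
  right_inv := by rintro ((_ | _) | (_ | _)) <;> rfl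

/-- The caps and the quads, as one finite type. -/
def faceEquiv : Face m ≃ ZMod m ⊕ ZMod m × Column m where
  toFun
    | cap i => .inl i
    | quad ℓ a => .inr (ℓ, a)
  invFun
    | .inl i => cap i
    | .inr (ℓ, a) => quad ℓ a
  left_inv f := by cases f <;> rfl
  right_inv := by rintro (_ | _) <;> rfl

instance [NeZero m] : Finite (Face m) := .of_equiv _ faceEquiv.symm

instance [NeZero m] : Finite (Vertex m) := .of_equiv _ vertexEquiv.symm

theorem card_vertex [NeZero m] : Nat.card (Vertex m) = Nat.card (Face m) + 2 := by
  rw [Nat.card_congr vertexEquiv, Nat.card_sum, Nat.card_eq_fintype_card (α := Bool),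
    Fintype.card_bool]

theorem card_dart : Nat.card (Dart m) = 4 * Nat.card (Face m) := by
  rw [Nat.card_prod, mul_comm, Nat.card_eq_fintype_card (α := Corner)]
  rfl

theorem tail_ne_tail_rev [Fact (1 < m)] (d : Dart m) : tail d ≠ tail (rev d) := by
  rw [← tail_face]
  rcases d with ⟨_ | ⟨ℓ, a⟩, _ | _ | _ | _⟩
  case quad.top => by_cases hℓ : ℓ = 0 <;> simp [tail, next, *]
  case quad.left => by_cases hℓ : ℓ = -1 <;> simp [tail, next, *]
  case quad.bottom => by_cases hℓ : ℓ = -1 <;> simp [tail, next, *]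
  case quad.right => by_cases hℓ : ℓ = 0 <;> simp [tail, next, shift_ne_self, *]
  all_goals simp [tail, next]

local instance [Fact (2 < m)] : Fact (1 < m) := ⟨one_lt_two.trans Fact.out⟩

local instance [Fact (2 < m)] : NeZero m := ⟨by have : 2 < m := Fact.out; omega⟩

section Square

variable [Fact (2 < m)]

theorem dart_ext ⦃d d' : Dart m⦄ (h_tail : tail d = tail d')
    (h_rev : tail (rev d) = tail (rev d')) : d = d' := by
  rw [← tail_face, ← tail_face] at h_rev
  have two_ne_zero : ((2 : ℕ) : ZMod m) ≠ 0 := natCast_ne_zero two_pos Fact.out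
  have add_one_ne (i : ZMod m) : i + 1 ≠ i := by simp
  rcases d with ⟨_ | ⟨ℓ, a⟩, _ | _ | _ | _⟩ <;>
    rcases d' with ⟨_ | ⟨ℓ', a'⟩, _ | _ | _ | _⟩ <;>
    simp only [face_mk, next, tail, Equiv.coe_fn_mk, reduceCtorEq, site.injEq, hub.injEq]
      at h_tail h_rev <;>
    grind [shift_fst, shift_snd, shift_ne_self]

/-- The drum as a combinatorial map. -/
def drum (m : ℕ) [Fact (2 < m)] : CombinatorialMap (Vertex m) (Dart m) where
  tail := tail
  rev := rev
  face := face
  rev_rev := rev_rev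
  tail_face := tail_face
  tail_ne_tail_rev := tail_ne_tail_rev
  dart_ext := dart_ext
  sameCycle := sameCycle_turn

theorem graph_adj_north_hub (i : ZMod m) : (drum m).graph.Adj north (hub i) :=
  (drum m).adj_tail_face (cap i, top)

theorem graph_adj_hub_site (a : Column m) : (drum m).graph.Adj (hub a.1) (site 0 a) := by
  simpa [drum, tail, next] using (drum m).adj_tail_face (quad 0 a, top)

theorem graph_adj_site_succ {ℓ : ZMod m} (hℓ : ℓ + 1 ≠ 0) (a : Column m) :
    (drum m).graph.Adj (site ℓ a) (site (ℓ + 1) a) := by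
  simpa [drum, tail, next, hℓ] using (drum m).adj_tail_face (quad (ℓ + 1) a, top)

theorem graph_adj_site_south (a : Column m) : (drum m).graph.Adj (site (-1) a) south := by
  simpa [drum, tail, next] using (drum m).adj_tail_face (quad (-1) a, left)

theorem graph_connected : (drum m).graph.Connected := by
  have hub_reachable (i : ZMod m) : (drum m).graph.Reachable north (hub i) :=
    (graph_adj_north_hub i).reachable
  have site_reachable (ℓ : ZMod m) (a : Column m) : (drum m).graph.Reachable north (site ℓ a) :=
    zmod_induction (P := fun ℓ => (drum m).graph.Reachable north (site ℓ a))
      ((hub_reachable a.1).trans (graph_adj_hub_site a).reachable)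
      (fun _ hℓ h => h.trans (graph_adj_site_succ hℓ a).reachable) ℓ
  refine SimpleGraph.connected_iff_exists_forall_reachable _ |>.2 ⟨north, ?_⟩
  rintro (_ | _ | i | ⟨ℓ, a⟩)
  · exact .rfl
  · exact (site_reachable (-1) 0).trans (graph_adj_site_south 0).reachable
  · exact hub_reachable i
  · exact site_reachable ℓ a

theorem isPlane : (drum m).rotationSystem.IsPlane := by
  have : Nontrivial (Vertex m) := ⟨north, south, nofun⟩
  refine RotationSystem.isPlane_of_connected graph_connected ?_
  have numFaces : (drum m).rotationSystem.numFaces = Nat.card (Face m) :=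
    (drum m).numFaces_eq_card (f := Prod.fst) (fun f => ⟨(f, top), rfl⟩) (fun _ => rfl)
      sameCycle_face
  have card_edgeSet := (drum m).card_edgeSet
  rw [card_dart] at card_edgeSet
  rw [numFaces, card_vertex]
  omega

/-- The square of the drum. -/
noncomputable def square (m : ℕ) [Fact (2 < m)] : SimpleGraph (Vertex m) :=
  (drum m).rotationSystem.power 2

theorem square_adj_hub_site (a : Column m) : (square m).Adj (hub a.1) (site 0 a) :=
  Or.inl (graph_adj_hub_site a)

theorem square_adj_site_succ {ℓ : ZMod m} (hℓ : ℓ + 1 ≠ 0) (a : Column m) :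
    (square m).Adj (site ℓ a) (site (ℓ + 1) a) :=
  Or.inl (graph_adj_site_succ hℓ a)

theorem square_adj_site_shift (ℓ : ZMod m) (a : Column m) :
    (square m).Adj (site ℓ a) (site ℓ (shift a)) :=
  (drum m).power_two_adj_tail_face_face (d := (quad ℓ a, left))
    fun h => shift_ne_self a (site.inj h).2.symm

theorem square_adj_site_diagonal {ℓ : ZMod m} (hℓ : ℓ + 1 ≠ 0) (hℓ' : ℓ + 1 ≠ -1)
    (a : Column m) : (square m).Adj (site ℓ a) (site (ℓ + 1 + 1) (shift a)) := by
  have h := (drum m).power_two_adj_tail_face_face (d := (quad (ℓ + 1) a, top))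
  simp only [drum, face_mk, next, Equiv.coe_fn_mk, tail, hℓ, hℓ', if_false,
    add_sub_cancel_right] at h
  exact h fun h => shift_ne_self a (site.inj h).2.symm

end Square

/-- The vertices available for drawing an edge `e` of the complete graph on the hubs: the two hubs,
the columns of the two orderings of `e` at the rings of even index at most `2 * b`, shifted once
for each odd ring crossed, and the ring `2 * b + 1`. -/
def route (e : Sym2 (ZMod m)) (b : ℕ) : Set (Vertex m)
  | north => False
  | south => False
  | hub i => i ∈ e
  | site ℓ a => ℓ.val = 2 * b + 1 ∨
      ∃ c ≤ b, ℓ.val = 2 * c ∧ ∃ x : Column m, s(x.1, x.2) = e ∧ (shift ^ c) x = a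

theorem hub_mem_route {i : ZMod m} {e : Sym2 (ZMod m)} {b : ℕ} : hub i ∈ route e b ↔ i ∈ e :=
  .rfl

theorem route_inter_route_subset {e e' : Sym2 (ZMod m)} {b b' : ℕ} (he : e ≠ e') (hb : b ≠ b') :
    route e b ∩ route e' b' ⊆ Set.range hub := by
  rintro (_ | _ | i | ⟨ℓ, a⟩) ⟨h, h'⟩
  · exact h.elim
  · exact h.elim
  · exact ⟨i, rfl⟩
  · rcases h with h | ⟨c, -, hc, x, rfl, rfl⟩ <;>
      rcases h' with h' | ⟨c', -, hc', x', rfl, hx⟩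
    · omega
    · omega
    · omega
    · obtain rfl : c' = c := by omega
      exact absurd (by rw [(shift ^ c').injective hx]) he

theorem rung_mem_route (e : Sym2 (ZMod m)) {b : ℕ} (hb : 2 * b + 1 < m) (a : Column m) :
    site ((2 * b + 1 : ℕ) : ZMod m) a ∈ route e b :=
  Or.inl (ZMod.val_natCast_of_lt hb)

theorem rail_mem_route (x : Column m) {b c : ℕ} (hb : 2 * b + 1 < m) (hc : c ≤ b) :
    site ((2 * c : ℕ) : ZMod m) ((shift ^ c) x) ∈ route s(x.1, x.2) b :=
  Or.inr ⟨c, hc, ZMod.val_natCast_of_lt (by omega), x, rfl, rfl⟩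

section Routes

variable [Fact (2 < m)]

theorem rung_reachable (e : Sym2 (ZMod m)) {b : ℕ} (hb : 2 * b + 1 < m) (a : Column m) :
    ((square m).induce (route e b)).Reachable ⟨_, rung_mem_route e hb 0⟩
      ⟨_, rung_mem_route e hb a⟩ :=
  column_induction (P := fun a => ((square m).induce (route e b)).Reachable
      ⟨_, rung_mem_route e hb 0⟩ ⟨_, rung_mem_route e hb a⟩) .rfl
    (fun a h => h.trans (SimpleGraph.Adj.reachable (square_adj_site_shift _ a))) a

theorem rail_reachable (x : Column m) {b : ℕ} (hb : 2 * b + 1 < m) {c : ℕ} (hc : c ≤ b) :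
    ((square m).induce (route s(x.1, x.2) b)).Reachable ⟨_, rung_mem_route _ hb 0⟩
      ⟨_, rail_mem_route x hb hc⟩ := by
  induction hc using Nat.decreasingInduction with
  | self =>
    refine (rung_reachable _ hb ((shift ^ b) x)).trans (SimpleGraph.Adj.reachable ?_)
    have h_ne : ((2 * b : ℕ) : ZMod m) + 1 ≠ 0 := mod_cast natCast_ne_zero (Nat.succ_pos _) hb
    have h_adj := (square_adj_site_succ h_ne ((shift ^ b) x)).symm
    exact mod_cast h_adj
  | of_succ c hc ih =>
    refine ih.trans (SimpleGraph.Adj.reachable ?_)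
    have h_ne : ((2 * c : ℕ) : ZMod m) + 1 ≠ 0 :=
      mod_cast natCast_ne_zero (Nat.succ_pos _) (by omega)
    have h_ne' : ((2 * c : ℕ) : ZMod m) + 1 ≠ -1 := by
      rw [Ne, eq_neg_iff_add_eq_zero]
      exact mod_cast natCast_ne_zero (Nat.succ_pos _) (by omega)
    have h_adj := (square_adj_site_diagonal h_ne h_ne' ((shift ^ c) x)).symm
    rw [← Equiv.Perm.mul_apply, ← pow_succ'] at h_adj
    exact mod_cast h_adj

theorem route_preconnected (e : Sym2 (ZMod m)) {b : ℕ} (hb : 2 * b + 1 < m) :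
    ((square m).induce (route e b)).Preconnected := by
  suffices h : ∀ v : route e b,
      ((square m).induce (route e b)).Reachable ⟨_, rung_mem_route e hb 0⟩ v from
    fun u v => (h u).symm.trans (h v)
  rintro ⟨_ | _ | i | ⟨ℓ, a⟩, h⟩
  · exact h.elim
  · exact h.elim
  · obtain ⟨j, rfl⟩ := h
    have h_rail := rail_reachable (i, j) hb (Nat.zero_le b)
    have h_adj := (square_adj_hub_site (i, j)).symm
    exact h_rail.trans (SimpleGraph.Adj.reachable (by simpa using h_adj))
  · rcases h with h | ⟨c, hc, h, x, rfl, rfl⟩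
    · obtain rfl : ((2 * b + 1 : ℕ) : ZMod m) = ℓ := by rw [← h, ZMod.natCast_zmod_val]
      exact rung_reachable e hb a
    · obtain rfl : ((2 * c : ℕ) : ZMod m) = ℓ := by rw [← h, ZMod.natCast_zmod_val]
      exact rail_reachable x hb hc

theorem isTopMinor_square {U : Type*} (H : SimpleGraph U) {c : U → ZMod m}
    (hc : Function.Injective c) {b : Sym2 U → ℕ} (hb : Function.Injective b)
    (b_lt : ∀ e, 2 * b e + 1 < m) : IsTopMinor H (square m) := by
  have hub_injective : Function.Injective (hub (m := m)) := fun _ _ => hub.inj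
  refine isTopMinor_of_preconnected_regions (hub_injective.comp hc)
    (fun e => route (e.map c) (b e)) (fun e _ => route_preconnected _ (b_lt e))
    (fun e _ u => ?_) (fun e _ e' _ hne v hv => ?_)
  · rw [Function.comp_apply, hub_mem_route, Sym2.mem_map]
    exact ⟨fun ⟨_, hu, h⟩ => hc h ▸ hu, fun hu => ⟨u, hu, rfl⟩⟩
  · obtain ⟨i, rfl⟩ := route_inter_route_subset ((Sym2.map.injective hc).ne hne) (hb.ne hne) hv
    obtain ⟨u, -, rfl⟩ := Sym2.mem_map.1 (hub_mem_route.1 hv.1)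
    exact ⟨u, rfl⟩

end Routes

end Drum

end WBW

theorem exists_twoFlat_with_clique_topMinor_general {U : Type*} [Finite U] (H : SimpleGraph U) :
    ∃ (W : Type) (_ : Finite W) (G : SimpleGraph W), WBW.IsFlat 2 G ∧ WBW.IsTopMinor H G := by
  classical
  have := Fintype.ofFinite U
  let m := 2 * Fintype.card (Sym2 U) + Fintype.card U + 3
  have : Fact (2 < m) := ⟨by omega⟩
  obtain ⟨c⟩ : Nonempty (U ↪ ZMod m) :=
    Function.Embedding.nonempty_of_card_le (by rw [ZMod.card]; omega)
  let b (e : Sym2 U) : Fin (Fintype.card (Sym2 U)) := Fintype.equivFin _ e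
  have b_injective : Function.Injective fun e => (b e : ℕ) :=
    Fin.val_injective.comp (Fintype.equivFin _).injective
  exact ⟨WBW.Drum.Vertex m, inferInstance, WBW.Drum.square m, WBW.Drum.isPlane.isFlat_power 2,
    WBW.Drum.isTopMinor_square H c.injective b_injective fun e => by omega⟩

/-- for every positive integer `n` there is a 2-flat graph containing
the complete graph `K_n` as a topological minor. -/
theorem exists_twoFlat_with_clique_topMinor (n : ℕ) (hn : 0 < n) :
    ∃ (W : Type) (_ : Finite W) (G : SimpleGraph W),
      WBW.IsFlat 2 G ∧ WBW.IsTopMinor (⊤ : SimpleGraph (Fin n)) G :=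
  exists_twoFlat_with_clique_topMinor_general ⊤
end
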